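/- Let R be a linear relation between X and Y, and let Δ_{ran R} := {(y,y) | y ∈ ran R}, a linear relation between Y and Y. The following are equivalent: (i) there exists a linear relation C between X and Y which is (the graph of) an operator such that Δ_{ran R} ⊆ C∘(R⁻¹); (ii) there exists a linear relation C ⊆ R which is (the graph of) an operator with ran C = ran R; (iii) dim(ker R) ≥ dim(mul R) (as cardinals). -/

import Mathlib

/-!
Linear relations between vector spaces, following Popovici–Sebestyén,
"Factorizations of Linear Relations".

A linear relation between `X` and `Y` is a linear subspace of `X × Y`,
formalized as `Submodule 𝕂 (X × Y)`.
-/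

universe u

namespace LinRel

variable {𝕂 : Type u} [Field 𝕂]
variable {X Y Z : Type u} [AddCommGroup X] [Module 𝕂 X]
  [AddCommGroup Y] [Module 𝕂 Y] [AddCommGroup Z] [Module 𝕂 Z]

/-- The domain of a linear relation. -/
def dom (R : Submodule 𝕂 (X × Y)) : Submodule 𝕂 X :=
  R.map (LinearMap.fst 𝕂 X Y)

/-- The range of a linear relation. -/
def ran (R : Submodule 𝕂 (X × Y)) : Submodule 𝕂 Y :=
  R.map (LinearMap.snd 𝕂 X Y)

/-- The kernel of a linear relation: `{x | (x, 0) ∈ R}`. -/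
def ker (R : Submodule 𝕂 (X × Y)) : Submodule 𝕂 X :=
  R.comap ((LinearMap.id : X →ₗ[𝕂] X).prod (0 : X →ₗ[𝕂] Y))

/-- The multivalued part of a linear relation: `{y | (0, y) ∈ R}`. -/
def mul (R : Submodule 𝕂 (X × Y)) : Submodule 𝕂 Y :=
  R.comap ((0 : Y →ₗ[𝕂] X).prod (LinearMap.id : Y →ₗ[𝕂] Y))

/-- The inverse of a linear relation: `{(y, x) | (x, y) ∈ R}`. -/
def inv (R : Submodule 𝕂 (X × Y)) : Submodule 𝕂 (Y × X) :=
  R.map ((LinearMap.snd 𝕂 X Y).prod (LinearMap.fst 𝕂 X Y))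

/-- The product (composition) of two linear relations:
`S ∘ R = {(x, z) | ∃ y, (x, y) ∈ R ∧ (y, z) ∈ S}`. -/
def comp (S : Submodule 𝕂 (Y × Z)) (R : Submodule 𝕂 (X × Y)) : Submodule 𝕂 (X × Z) where
  carrier := {p | ∃ y, (p.1, y) ∈ R ∧ (y, p.2) ∈ S}
  add_mem' := by
    rintro ⟨a, c⟩ ⟨a', c'⟩ ⟨y, h1, h2⟩ ⟨y', h1', h2'⟩
    exact ⟨y + y', R.add_mem h1 h1', S.add_mem h2 h2'⟩
  zero_mem' := ⟨0, R.zero_mem, S.zero_mem⟩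
  smul_mem' := by
    rintro c ⟨a, b⟩ ⟨y, h1, h2⟩
    exact ⟨c • y, R.smul_mem c h1, S.smul_mem c h2⟩

/-- The image `R(X₀)` of a subspace `X₀` under a linear relation `R`. -/
def img (R : Submodule 𝕂 (X × Y)) (X₀ : Submodule 𝕂 X) : Submodule 𝕂 Y :=
  ran (R ⊓ X₀.prod ⊤)

/-- The preimage `R⁻¹(Y₀)` of a subspace `Y₀` under a linear relation `R`. -/
def preimg (R : Submodule 𝕂 (X × Y)) (Y₀ : Submodule 𝕂 Y) : Submodule 𝕂 X :=
  img (inv R) Y₀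

end LinRel


open LinRel

variable {𝕂 : Type u} [Field 𝕂]
variable {X Y Z : Type u} [AddCommGroup X] [Module 𝕂 X]
  [AddCommGroup Y] [Module 𝕂 Y] [AddCommGroup Z] [Module 𝕂 Z]

/-!
Call a linear map `g : Y → X` a selection if `(g y, y) ∈ R` for every `y ∈ ran R`. An operator
`C ≤ R` with `ran C = ran R` exists iff some selection is injective on `ran R`. If `g y = 0` with
`y ∈ ran R`, then `(0, y) ∈ R`, so this injectivity only has to be tested on `mul R`, which every
selection maps into `ker R`. Adding to a selection a linear map into `ker R` gives another one, so
every linear map `mul R → ker R` extends to a selection; an injective one is available exactly when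
`dim (mul R) ≤ dim (ker R)`.
-/

namespace LinRel

theorem mem_ran {R : Submodule 𝕂 (X × Y)} {y : Y} : y ∈ ran R ↔ ∃ x, (x, y) ∈ R := by
  simp [ran]

theorem mem_ker {R : Submodule 𝕂 (X × Y)} {x : X} : x ∈ ker R ↔ (x, (0 : Y)) ∈ R :=
  Iff.rfl

theorem mem_mul {R : Submodule 𝕂 (X × Y)} {y : Y} : y ∈ mul R ↔ ((0 : X), y) ∈ R :=
  Iff.rfl

theorem mem_inv {R : Submodule 𝕂 (X × Y)} {x : X} {y : Y} : (y, x) ∈ inv R ↔ (x, y) ∈ R := by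
  simp [inv]

theorem mem_comp {S : Submodule 𝕂 (Y × Z)} {R : Submodule 𝕂 (X × Y)} {x : X} {z : Z} :
    (x, z) ∈ comp S R ↔ ∃ y, (x, y) ∈ R ∧ (y, z) ∈ S :=
  Iff.rfl

theorem mul_mono {C R : Submodule 𝕂 (X × Y)} (h : C ≤ R) : mul C ≤ mul R :=
  Submodule.comap_mono h

theorem ran_mono {C R : Submodule 𝕂 (X × Y)} (h : C ≤ R) : ran C ≤ ran R :=
  Submodule.map_mono h

theorem mul_le_ran (R : Submodule 𝕂 (X × Y)) : mul R ≤ ran R :=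
  fun _ hy => mem_ran.2 ⟨0, mem_mul.1 hy⟩

theorem diagonal_le_comp_inv_iff {C R : Submodule 𝕂 (X × Y)} {V : Submodule 𝕂 Y} :
    V.map ((LinearMap.id : Y →ₗ[𝕂] Y).prod LinearMap.id) ≤ comp C (inv R) ↔ V ≤ ran (C ⊓ R) := by
  have hmem (y : Y) : (y, y) ∈ comp C (inv R) ↔ y ∈ ran (C ⊓ R) := by
    simp only [mem_comp, mem_inv, mem_ran, Submodule.mem_inf, and_comm]
  exact Submodule.map_le_iff_le_comap.trans (forall₂_congr fun y _ => hmem y)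

theorem exists_diagonal_le_comp_inv_iff (R : Submodule 𝕂 (X × Y)) :
    (∃ C : Submodule 𝕂 (X × Y), mul C = ⊥ ∧
        (ran R).map ((LinearMap.id : Y →ₗ[𝕂] Y).prod LinearMap.id) ≤ comp C (inv R)) ↔
      ∃ C ≤ R, mul C = ⊥ ∧ ran C = ran R := by
  simp only [diagonal_le_comp_inv_iff]
  constructor
  · rintro ⟨C, hC, hran⟩
    exact ⟨C ⊓ R, inf_le_right, eq_bot_mono (mul_mono inf_le_left) hC,
      (ran_mono inf_le_right).antisymm hran⟩
  · rintro ⟨C, hCR, hC, hran⟩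
    exact ⟨C, hC, by rw [inf_eq_left.2 hCR, hran]⟩

/-- `g` is a linear selection of the fibres of `R` over its range: it picks, for every `y ∈ ran R`,
an element `g y` related to `y`, so it is a selection of `R⁻¹` in the sense of multivalued maps.
It is defined on all of `Y` to avoid maps out of a subtype; its values off `ran R` are
irrelevant. -/
def IsSelection (R : Submodule 𝕂 (X × Y)) (g : Y →ₗ[𝕂] X) : Prop :=
  ∀ y ∈ ran R, (g y, y) ∈ R

theorem exists_isSelection (R : Submodule 𝕂 (X × Y)) : ∃ g, IsSelection R g := by
  let π : R →ₗ[𝕂] ran R := (LinearMap.snd 𝕂 X Y).submoduleMap R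
  obtain ⟨s, hs⟩ := π.exists_rightInverse_of_surjective
    (LinearMap.range_eq_top.2 (LinearMap.submoduleMap_surjective _ R))
  obtain ⟨g, hg⟩ := LinearMap.exists_extend (LinearMap.fst 𝕂 X Y ∘ₗ R.subtype ∘ₗ s)
  refine ⟨g, fun y hy => ?_⟩
  have hfst : g y = (s ⟨y, hy⟩ : X × Y).1 := LinearMap.congr_fun hg ⟨y, hy⟩
  have hsnd : (s ⟨y, hy⟩ : X × Y).2 = y := congrArg Subtype.val (LinearMap.congr_fun hs ⟨y, hy⟩)
  have hpair : (g y, y) = (s ⟨y, hy⟩ : X × Y) := Prod.ext hfst hsnd.symm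
  exact hpair ▸ (s ⟨y, hy⟩).2

namespace IsSelection

variable {C R : Submodule 𝕂 (X × Y)} {g : Y →ₗ[𝕂] X}

theorem mono (hg : IsSelection C g) (hCR : C ≤ R) (hran : ran R ≤ ran C) : IsSelection R g :=
  fun y hy => hCR (hg y (hran hy))

theorem apply_mem_ker (hg : IsSelection R g) {y : Y} (hy : y ∈ mul R) : g y ∈ ker R := by
  simpa [mem_ker] using R.sub_mem (hg y (mul_le_ran R hy)) (mem_mul.1 hy)

theorem ker_inf_ran_le_mul (hg : IsSelection R g) : LinearMap.ker g ⊓ ran R ≤ mul R := by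
  rintro y ⟨hgy, hy⟩
  simpa [mem_mul, LinearMap.mem_ker.1 hgy] using hg y hy

theorem disjoint_ker_ran_iff (hg : IsSelection R g) :
    Disjoint (LinearMap.ker g) (ran R) ↔ Disjoint (LinearMap.ker g) (mul R) :=
  ⟨fun h => h.mono_right (mul_le_ran R), fun h => disjoint_iff_inf_le.2 <|
    (le_inf inf_le_left hg.ker_inf_ran_le_mul).trans h.le_bot⟩

theorem add_subtype_comp (hg : IsSelection R g) (k : Y →ₗ[𝕂] ker R) :
    IsSelection R (g + (ker R).subtype ∘ₗ k) := fun y hy => by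
  simpa using R.add_mem (hg y hy) (mem_ker.1 (k y).2)

end IsSelection

theorem exists_isSelection_extend {R : Submodule 𝕂 (X × Y)} (j : mul R →ₗ[𝕂] ker R) :
    ∃ g, IsSelection R g ∧ ∀ y : mul R, g y = j y := by
  obtain ⟨g, hg⟩ := exists_isSelection R
  obtain ⟨k, hk⟩ := LinearMap.exists_extend (j - g.restrict fun _ => hg.apply_mem_ker)
  refine ⟨g + (ker R).subtype ∘ₗ k, hg.add_subtype_comp k, fun y => ?_⟩
  have hky : (k y : X) = j y - g y := congrArg Subtype.val (LinearMap.congr_fun hk y)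
  simp [hky]

theorem ran_map_prod_id (g : Y →ₗ[𝕂] X) (V : Submodule 𝕂 Y) :
    ran (V.map (g.prod LinearMap.id)) = V := by
  rw [ran, ← Submodule.map_comp, LinearMap.snd_prod, Submodule.map_id]

theorem mul_map_prod_id (g : Y →ₗ[𝕂] X) (V : Submodule 𝕂 Y) :
    mul (V.map (g.prod LinearMap.id)) = LinearMap.ker g ⊓ V := by
  ext y
  simp [mem_mul, and_comm]

theorem exists_operator_ran_eq_iff_exists_isSelection (R : Submodule 𝕂 (X × Y)) :
    (∃ C ≤ R, mul C = ⊥ ∧ ran C = ran R) ↔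
      ∃ g, IsSelection R g ∧ Disjoint (LinearMap.ker g) (ran R) := by
  constructor
  · rintro ⟨C, hCR, hC, hran⟩
    obtain ⟨g, hg⟩ := exists_isSelection C
    refine ⟨g, hg.mono hCR hran.ge, ?_⟩
    rw [← hran, hg.disjoint_ker_ran_iff, hC]
    exact disjoint_bot_right
  · rintro ⟨g, hg, hdisj⟩
    refine ⟨(ran R).map (g.prod LinearMap.id), Submodule.map_le_iff_le_comap.2 hg, ?_,
      ran_map_prod_id g (ran R)⟩
    rw [mul_map_prod_id, hdisj.eq_bot]

theorem exists_isSelection_disjoint_iff_rank_le (R : Submodule 𝕂 (X × Y)) :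
    (∃ g, IsSelection R g ∧ Disjoint (LinearMap.ker g) (ran R)) ↔
      Module.rank 𝕂 (mul R) ≤ Module.rank 𝕂 (ker R) := by
  rw [rank_le_iff_exists_linearMap]
  constructor
  · rintro ⟨g, hg, hdisj⟩
    have hinj : Set.InjOn g (mul R) :=
      LinearMap.injOn_of_disjoint_ker subset_rfl (hg.disjoint_ker_ran_iff.1 hdisj).symm
    exact ⟨g.restrict fun _ => hg.apply_mem_ker, hinj.injective.codRestrict _⟩
  · rintro ⟨j, hj⟩
    obtain ⟨g, hg, hgj⟩ := exists_isSelection_extend j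
    refine ⟨g, hg, hg.disjoint_ker_ran_iff.2 (Submodule.disjoint_def.2 fun y hgy hy => ?_)⟩
    have hjy : j ⟨y, hy⟩ = 0 := Subtype.ext ((hgj ⟨y, hy⟩).symm.trans hgy)
    exact congrArg Subtype.val ((map_eq_zero_iff j hj).1 hjy)

end LinRel

/-- Corollary 5.10: with `Δ_{ran R} = {(y, y) | y ∈ ran R}`, there exists an
operator `C` with `Δ_{ran R} ⊆ C R⁻¹` iff there exists an operator `C ⊆ R`
with `ran C = ran R`, iff `dim (ker R) ≥ dim (mul R)`. -/
theorem statement_19 (R : Submodule 𝕂 (X × Y)) :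
    ((∃ C : Submodule 𝕂 (X × Y), mul C = ⊥ ∧
        (ran R).map ((LinearMap.id : Y →ₗ[𝕂] Y).prod (LinearMap.id : Y →ₗ[𝕂] Y))
          ≤ comp C (inv R)) ↔
      (∃ C : Submodule 𝕂 (X × Y), C ≤ R ∧ mul C = ⊥ ∧ ran C = ran R)) ∧
    ((∃ C : Submodule 𝕂 (X × Y), C ≤ R ∧ mul C = ⊥ ∧ ran C = ran R) ↔
      Module.rank 𝕂 (mul R) ≤ Module.rank 𝕂 (ker R)) := by
  exact ⟨exists_diagonal_le_comp_inv_iff R,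
    (exists_operator_ran_eq_iff_exists_isSelection R).trans
      (exists_isSelection_disjoint_iff_rank_le R)⟩
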